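/- arXiv:1110.3265 — 5 statements merged into one kernel-verified Lean document; each statement's English description precedes it below -/
import Mathlib

section
/- Let X = (X_1,…,X_k) follow the negative multinomial distribution NM_k(r,θ) with dispersion matrix Σ = (σ_{ij}), and let g : ℕ^k → ℝ be such that E|X_j g(X)| < ∞ and E|X_j Δ_i g(X)| < ∞ for all i, j = 1,…,k. Then Cov( Σ_{i=1}^k X_i , g(X) ) = E[ w(X) · Σ_{i=1}^k c_i Δ_i g(X) ], where c_i := Σ_{j=1}^k σ_{ij} and w is the negative multinomial w-function. -/
/-!
Write `p` for the p.m.f., `S = ∑ xᵢ`, `q = ∑ θᵢ` and `θ₀ = 1 - q`. The row sums of the dispersion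
matrix are `cᵢ = r θᵢ / θ₀²`, so `w(x) cᵢ = (r + S) θᵢ / θ₀`.

The heart of the proof is the ratio relation `p(x + eᵢ) (xᵢ + 1) = θᵢ (r + S) p(x)`
(`negMultPMF_shift`). Reindexing by `x ↦ x + eᵢ` turns it into the Stein-type identity
`E[Xᵢ g(X)] = θᵢ E[(r + S) g(X + eᵢ)]` (`stein_identity`), whose right-hand side is
`θᵢ (r E[g] + E[S g] + E[(r + S) Δᵢ g])`. These expectations are finite by hypothesis, except that
of `g` and `Δᵢ g` alone, which is supplied by `summable_of_summable_coord`. Summing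
over `i` and solving for `E[S g]` gives
`E[S g] - (r q / θ₀) E[g] = ∑ᵢ (θᵢ / θ₀) E[(r + S) Δᵢ g]`.

It remains to see that `E[S] = r q / θ₀`. The total mass of `p` is one (`hasSum_negMultPMF`), by the
multinomial theorem on each level set of `S` followed by the negative binomial series. Since
`θ₀ (r + S) p_r(x) = r p_{r+1}(x)`, total mass one for the parameter `r + 1` gives
`E[r + S] = r / θ₀`.
-/

open scoped BigOperators

/-- The p.m.f. of the negative multinomial distribution `NM_k(r, θ)` on `ℕ^k`. -/
noncomputable def negMultPMF (k r : ℕ) (θ : Fin k → ℝ) (x : Fin k → ℕ) : ℝ :=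
  (Nat.factorial (r + ∑ i, x i - 1) : ℝ) /
      ((∏ i, (Nat.factorial (x i) : ℝ)) * (Nat.factorial (r - 1) : ℝ)) *
    (∏ i, θ i ^ x i) * (1 - ∑ i, θ i) ^ r

/-- The negative multinomial `w`-function: `w(x) = θ₀ (r + Σ xᵢ) / r`. -/
noncomputable def negMultW (k r : ℕ) (θ : Fin k → ℝ) (x : Fin k → ℕ) : ℝ :=
  (1 - ∑ i, θ i) * ((r : ℝ) + ∑ i, (x i : ℝ)) / (r : ℝ)

/-- The dispersion (covariance) matrix of the negative multinomial distribution. -/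
noncomputable def negMultSigma (k r : ℕ) (θ : Fin k → ℝ) (i j : Fin k) : ℝ :=
  if i = j then (r : ℝ) * θ i * ((1 - ∑ s, θ s) + θ i) / (1 - ∑ s, θ s) ^ 2
  else (r : ℝ) * θ i * θ j / (1 - ∑ s, θ s) ^ 2

/-- Forward difference `Δ_i g (x) = g (x + e_i) - g x`. -/
def fd {k : ℕ} (g : (Fin k → ℕ) → ℝ) (i : Fin k) (x : Fin k → ℕ) : ℝ :=
  g (Function.update x i (x i + 1)) - g x

lemma negMultPMF_nonneg {k : ℕ} (r : ℕ) {θ : Fin k → ℝ} (hθ : ∀ i, 0 < θ i ∧ θ i < 1)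
    (hθ0 : 0 < 1 - ∑ i, θ i) (x : Fin k → ℕ) : 0 ≤ negMultPMF k r θ x := by
  have : 0 ≤ ∏ i, θ i ^ x i := Finset.prod_nonneg fun i _ => pow_nonneg (hθ i).1.le _
  unfold negMultPMF
  positivity

/-- The p.m.f. factors as a negative binomial weight of the total times a multinomial weight. -/
lemma negMultPMF_succ_eq (k m : ℕ) (θ : Fin k → ℝ) (x : Fin k → ℕ) :
    negMultPMF k (m + 1) θ x = (1 - ∑ i, θ i) ^ (m + 1) * ((∑ i, x i + m).choose m : ℝ) *
      ((Nat.multinomial Finset.univ x : ℝ) * ∏ i, θ i ^ x i) := by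
  have h1 : (∏ i, (Nat.factorial (x i) : ℝ)) * (Nat.multinomial Finset.univ x : ℝ)
      = (Nat.factorial (∑ i, x i) : ℝ) := by
    exact_mod_cast Nat.multinomial_spec Finset.univ x
  have h2 : ((∑ i, x i + m).choose m : ℝ) * (Nat.factorial (∑ i, x i) : ℝ) * (Nat.factorial m : ℝ)
      = (Nat.factorial (∑ i, x i + m) : ℝ) := by
    have := Nat.add_choose_mul_factorial_mul_factorial (∑ i, x i) m
    exact_mod_cast this
  have h3 : (∏ i, (Nat.factorial (x i) : ℝ)) ≠ 0 :=
    Finset.prod_ne_zero_iff.2 fun i _ => by positivity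
  unfold negMultPMF
  rw [show m + 1 + ∑ i, x i - 1 = ∑ i, x i + m by omega, show m + 1 - 1 = m by omega, ← h2, ← h1]
  field_simp

/-- The negative multinomial p.m.f. has total mass one. -/
lemma hasSum_negMultPMF {k : ℕ} (m : ℕ) {θ : Fin k → ℝ} (hθ : ∀ i, 0 < θ i ∧ θ i < 1)
    (hθ0 : 0 < 1 - ∑ i, θ i) : HasSum (negMultPMF k (m + 1) θ) 1 := by
  have hq : 0 ≤ ∑ i, θ i := Finset.sum_nonneg fun i _ => (hθ i).1.le
  let e := Equiv.sigmaFiberEquiv (fun x : Fin k → ℕ => ∑ i, x i)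
  have hfib : ∀ n : ℕ, HasSum (fun y : {x : Fin k → ℕ // ∑ i, x i = n} =>
      negMultPMF k (m + 1) θ y)
      ((1 - ∑ i, θ i) ^ (m + 1) * (((n + m).choose m : ℝ) * (∑ i, θ i) ^ n)) := by
    intro n
    have hmem : ∀ x : Fin k → ℕ, ∑ i, x i = n ↔ x ∈ Finset.piAntidiag Finset.univ n := by simp
    have h := Finset.hasSum (Finset.piAntidiag Finset.univ n) (negMultPMF k (m + 1) θ)
    have h := (Equiv.subtypeEquivRight hmem).hasSum_iff.2 h
    convert! h using 1
    rw [Finset.sum_pow_eq_sum_piAntidiag, Finset.mul_sum, Finset.mul_sum]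
    refine Finset.sum_congr rfl fun x hx => ?_
    rw [negMultPMF_succ_eq, (hmem x).2 hx]
    ring
  have hser : HasSum (fun n : ℕ =>
      (1 - ∑ i, θ i) ^ (m + 1) * (((n + m).choose m : ℝ) * (∑ i, θ i) ^ n)) 1 := by
    have h := (hasSum_choose_mul_geometric_of_norm_lt_one m (r := ∑ i, θ i)
      (by rw [Real.norm_of_nonneg hq]; linarith)).mul_left ((1 - ∑ i, θ i) ^ (m + 1))
    rwa [mul_one_div_cancel (by positivity)] at h
  have hs : Summable (negMultPMF k (m + 1) θ ∘ e) := by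
    refine (summable_sigma_of_nonneg fun _ => negMultPMF_nonneg _ hθ hθ0 _).2
      ⟨fun n => (hfib n).summable, ?_⟩
    convert! hser.summable using 2 with n
    exact (hfib n).tsum_eq
  rw [← e.hasSum_iff]
  have h := hs.hasSum.sigma hfib
  rw [← h.unique hser]
  exact hs.hasSum

/-- Multiplying the p.m.f. by `r + S` raises the parameter `r` by one. -/
lemma negMultPMF_mul_add (k m : ℕ) (θ : Fin k → ℝ) (x : Fin k → ℕ) :
    (1 - ∑ i, θ i) * (negMultPMF k (m + 1) θ x * ((m + 1 : ℕ) + ∑ i, (x i : ℝ)))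
      = (m + 1 : ℕ) * negMultPMF k (m + 2) θ x := by
  have h3 : (∏ i, (Nat.factorial (x i) : ℝ)) ≠ 0 :=
    Finset.prod_ne_zero_iff.2 fun i _ => by positivity
  unfold negMultPMF
  rw [show m + 1 + ∑ i, x i - 1 = m + ∑ i, x i by omega,
    show m + 2 + ∑ i, x i - 1 = m + ∑ i, x i + 1 by omega,
    show m + 1 - 1 = m by omega, show m + 2 - 1 = m + 1 by omega,
    Nat.factorial_succ, Nat.factorial_succ]
  push_cast
  field_simp
  ring

/-- The mean of the total: `E[S] = r q / θ₀`. -/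
lemma hasSum_negMultPMF_mul_sum {k : ℕ} (m : ℕ) {θ : Fin k → ℝ} (hθ : ∀ i, 0 < θ i ∧ θ i < 1)
    (hθ0 : 0 < 1 - ∑ i, θ i) :
    HasSum (fun x => negMultPMF k (m + 1) θ x * ∑ i, (x i : ℝ))
      ((m + 1 : ℕ) * (∑ i, θ i) / (1 - ∑ i, θ i)) := by
  have h := ((hasSum_negMultPMF (m + 1) hθ hθ0).mul_left ((m + 1 : ℕ) / (1 - ∑ i, θ i))).sub
    ((hasSum_negMultPMF m hθ hθ0).mul_left ((m + 1 : ℕ) : ℝ))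
  convert! h using 1
  · funext x
    have := negMultPMF_mul_add k m θ x
    field_simp
    linear_combination this
  · field_simp
    ring

/-- The ratio relation `p(x + eᵢ) (xᵢ + 1) = θᵢ (r + S) p(x)`. -/
lemma negMultPMF_shift (k m : ℕ) (θ : Fin k → ℝ) (i : Fin k) (x : Fin k → ℕ) :
    negMultPMF k (m + 1) θ (Function.update x i (x i + 1)) * ((x i + 1 : ℕ) : ℝ)
      = θ i * (negMultPMF k (m + 1) θ x * ((m + 1 : ℕ) + ∑ j, (x j : ℝ))) := by
  have hS : ∑ j, Function.update x i (x i + 1) j = ∑ j, x j + 1 := by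
    rw [Finset.sum_update_of_mem (Finset.mem_univ i),
      ← Finset.add_sum_erase _ x (Finset.mem_univ i), Finset.sdiff_singleton_eq_erase]
    ring
  have hP : ∏ j, θ j ^ (Function.update x i (x i + 1) j) = θ i * ∏ j, θ j ^ x j := by
    rw [← Finset.mul_prod_erase _ _ (Finset.mem_univ i),
      ← Finset.mul_prod_erase _ (fun j => θ j ^ x j) (Finset.mem_univ i), ← mul_assoc,
      Function.update_self, pow_succ']
    congr 1
    refine Finset.prod_congr rfl fun j hj => ?_
    rw [Function.update_of_ne (Finset.ne_of_mem_erase hj)]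
  have hF : ∏ j, (Nat.factorial (Function.update x i (x i + 1) j) : ℝ)
      = ((x i + 1 : ℕ) : ℝ) * ∏ j, (Nat.factorial (x j) : ℝ) := by
    rw [← Finset.mul_prod_erase _ _ (Finset.mem_univ i),
      ← Finset.mul_prod_erase _ (fun j => (Nat.factorial (x j) : ℝ)) (Finset.mem_univ i),
      ← mul_assoc, Function.update_self, Nat.factorial_succ, Nat.cast_mul]
    congr 1
    refine Finset.prod_congr rfl fun j hj => ?_
    rw [Function.update_of_ne (Finset.ne_of_mem_erase hj)]
  have h3 : (∏ i, (Nat.factorial (x i) : ℝ)) ≠ 0 :=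
    Finset.prod_ne_zero_iff.2 fun i _ => by positivity
  unfold negMultPMF
  rw [hS, hP, hF, show m + 1 + (∑ j, x j + 1) - 1 = m + ∑ i, x i + 1 by omega,
    show m + 1 + ∑ i, x i - 1 = m + ∑ i, x i by omega, Nat.factorial_succ]
  push_cast
  field_simp
  ring

/-- Integrability of every `Xⱼ f(X)` forces integrability of `f(X)`, since some `xⱼ ≥ 1` unless
`x = 0`. -/
lemma summable_of_summable_coord {k : ℕ} (r : ℕ) {θ : Fin k → ℝ} (hθ : ∀ i, 0 < θ i ∧ θ i < 1)
    (hθ0 : 0 < 1 - ∑ i, θ i) (f : (Fin k → ℕ) → ℝ)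
    (hf : ∀ j : Fin k, Summable fun x : Fin k → ℕ => negMultPMF k r θ x * |(x j : ℝ) * f x|) :
    Summable fun x => negMultPMF k r θ x * f x := by
  have hp := negMultPMF_nonneg r hθ hθ0
  refine Summable.of_norm_bounded_eventually (summable_sum fun j (_ : j ∈ Finset.univ) => hf j) ?_
  filter_upwards [(Set.finite_singleton (0 : Fin k → ℕ)).compl_mem_cofinite] with x hx
  obtain ⟨j, hj⟩ := Function.ne_iff.1 (show x ≠ 0 from hx)
  have hj1 : (1 : ℝ) ≤ x j := by exact_mod_cast Nat.one_le_iff_ne_zero.2 hj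
  refine le_trans ?_ (Finset.single_le_sum
    (f := fun j => negMultPMF k r θ x * |(x j : ℝ) * f x|)
    (fun j _ => mul_nonneg (hp x) (abs_nonneg _)) (Finset.mem_univ j))
  rw [Real.norm_eq_abs, abs_mul, abs_of_nonneg (hp x), abs_mul, Nat.abs_cast]
  exact mul_le_mul_of_nonneg_left (le_mul_of_one_le_left (abs_nonneg _) hj1) (hp x)

lemma summable_coord {k : ℕ} (r : ℕ) {θ : Fin k → ℝ} (hθ : ∀ i, 0 < θ i ∧ θ i < 1)
    (hθ0 : 0 < 1 - ∑ i, θ i) (f : (Fin k → ℕ) → ℝ) (j : Fin k)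
    (hf : Summable fun x : Fin k → ℕ => negMultPMF k r θ x * |(x j : ℝ) * f x|) :
    Summable fun x => negMultPMF k r θ x * ((x j : ℝ) * f x) := by
  refine Summable.of_norm (hf.congr fun x => ?_)
  rw [Real.norm_eq_abs, abs_mul (negMultPMF k r θ x),
    abs_of_nonneg (negMultPMF_nonneg r hθ hθ0 x)]

lemma summable_total {k : ℕ} (r : ℕ) {θ : Fin k → ℝ} (hθ : ∀ i, 0 < θ i ∧ θ i < 1)
    (hθ0 : 0 < 1 - ∑ i, θ i) (f : (Fin k → ℕ) → ℝ)
    (hf : ∀ j : Fin k, Summable fun x : Fin k → ℕ => negMultPMF k r θ x * |(x j : ℝ) * f x|) :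
    Summable fun x => negMultPMF k r θ x * ((∑ j, (x j : ℝ)) * f x) := by
  refine (summable_sum fun j (_ : j ∈ Finset.univ) =>
    summable_coord r hθ hθ0 f j (hf j)).congr fun x => ?_
  rw [Finset.sum_mul, Finset.mul_sum]

/-- The Stein-type identity `E[Xᵢ g(X)] = θᵢ E[(r + S) g(X + eᵢ)]`. It holds for every `g`: the
substitution `x ↦ x + eᵢ` is injective and misses only points where `xᵢ = 0`, so both sides are
the same series up to zero terms. -/
lemma stein_identity (k m : ℕ) (θ : Fin k → ℝ) (g : (Fin k → ℕ) → ℝ) (i : Fin k) :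
    ∑' x : Fin k → ℕ, negMultPMF k (m + 1) θ x * ((x i : ℝ) * g x)
      = θ i * ∑' x : Fin k → ℕ, negMultPMF k (m + 1) θ x *
          (((m + 1 : ℕ) + ∑ j, (x j : ℝ)) * g (Function.update x i (x i + 1))) := by
  have hinj : Function.Injective
      (fun x : Fin k → ℕ => Function.update x i (x i + 1)) := by
    intro x y hxy
    funext j
    have := congrFun hxy j
    by_cases hj : j = i
    · subst hj
      simpa using this
    · simpa [Function.update_of_ne hj] using this
  rw [← tsum_mul_left, ← hinj.tsum_eq]
  · refine tsum_congr fun x => ?_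
    have h := negMultPMF_shift k m θ i x
    simp only [Function.update_self]
    linear_combination g (Function.update x i (x i + 1)) * h
  · intro x hx
    have hxi : x i ≠ 0 := by
      rintro h0
      simp [h0] at hx
    refine ⟨Function.update x i (x i - 1), ?_⟩
    simp [Nat.sub_add_cancel (Nat.one_le_iff_ne_zero.2 hxi)]

/-- The row sums of the dispersion matrix: `cᵢ = r θᵢ / θ₀²`. -/
lemma sum_negMultSigma {k : ℕ} (r : ℕ) {θ : Fin k → ℝ} (i : Fin k) :
    ∑ j, negMultSigma k r θ i j = r * θ i / (1 - ∑ s, θ s) ^ 2 := by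
  have h : ∀ j, negMultSigma k r θ i j = r * θ i / (1 - ∑ s, θ s) ^ 2 *
      ((if i = j then 1 - ∑ s, θ s else 0) + θ j) := by
    intro j
    unfold negMultSigma
    split_ifs with hij
    · subst hij
      ring
    · ring
  rw [Finset.sum_congr rfl fun j _ => h j, ← Finset.mul_sum, Finset.sum_add_distrib]
  simp

/-- Covariance identity for the negative multinomial distribution:
`Cov(Σᵢ Xᵢ, g(X)) = E[w(X) Σᵢ cᵢ Δᵢ g(X)]` where `cᵢ = Σⱼ σᵢⱼ`, under the integrability
conditions `E|Xⱼ g(X)| < ∞` and `E|Xⱼ Δᵢ g(X)| < ∞` for all `i, j`. -/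
theorem negative_multinomial_covariance_identity
    (k r : ℕ) (hk : 1 ≤ k) (hr : 1 ≤ r) (θ : Fin k → ℝ)
    (hθ : ∀ i, 0 < θ i ∧ θ i < 1) (hθ0 : 0 < 1 - ∑ i, θ i)
    (g : (Fin k → ℕ) → ℝ)
    (hg : ∀ j : Fin k,
      Summable (fun x : Fin k → ℕ => negMultPMF k r θ x * |(x j : ℝ) * g x|))
    (hdg : ∀ i j : Fin k,
      Summable (fun x : Fin k → ℕ => negMultPMF k r θ x * |(x j : ℝ) * fd g i x|)) :
    (∑' x : Fin k → ℕ, negMultPMF k r θ x * ((∑ i, (x i : ℝ)) * g x))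
      - (∑' x : Fin k → ℕ, negMultPMF k r θ x * ∑ i, (x i : ℝ))
        * (∑' x : Fin k → ℕ, negMultPMF k r θ x * g x)
    = ∑' x : Fin k → ℕ,
        negMultPMF k r θ x *
          (negMultW k r θ x * ∑ i, (∑ j, negMultSigma k r θ i j) * fd g i x) := by
  obtain ⟨m, rfl⟩ : ∃ m, r = m + 1 := ⟨r - 1, by omega⟩
  have hne : (1 - ∑ i, θ i) ≠ 0 := hθ0.ne'
  have sA := summable_of_summable_coord (m + 1) hθ hθ0 g hg
  have sB := summable_total (m + 1) hθ hθ0 g hg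
  have sD : ∀ i, Summable fun x : Fin k → ℕ => negMultPMF k (m + 1) θ x *
      (((m + 1 : ℕ) + ∑ j, (x j : ℝ)) * fd g i x) := fun i =>
    (((summable_of_summable_coord (m + 1) hθ hθ0 (fd g i) (hdg i)).mul_left
      ((m + 1 : ℕ) : ℝ)).add (summable_total (m + 1) hθ hθ0 (fd g i) (hdg i))).congr
      fun x => by ring
  have hstein : ∀ i, ∑' x : Fin k → ℕ, negMultPMF k (m + 1) θ x * ((x i : ℝ) * g x)
      = θ i * ((m + 1 : ℕ) * (∑' x, negMultPMF k (m + 1) θ x * g x)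
        + (∑' x : Fin k → ℕ, negMultPMF k (m + 1) θ x * ((∑ j, (x j : ℝ)) * g x))
        + ∑' x : Fin k → ℕ, negMultPMF k (m + 1) θ x *
          (((m + 1 : ℕ) + ∑ j, (x j : ℝ)) * fd g i x)) := by
    intro i
    rw [stein_identity, ← tsum_mul_left (a := ((m + 1 : ℕ) : ℝ)),
      ← (sA.mul_left _).tsum_add sB, ← ((sA.mul_left _).add sB).tsum_add (sD i)]
    congr 1
    refine tsum_congr fun x => ?_
    unfold fd
    ring
  have hsplit : ∑' x : Fin k → ℕ, negMultPMF k (m + 1) θ x * ((∑ i, (x i : ℝ)) * g x)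
      = ∑ i, ∑' x : Fin k → ℕ, negMultPMF k (m + 1) θ x * ((x i : ℝ) * g x) := by
    rw [← Summable.tsum_finsetSum fun i _ => summable_coord (m + 1) hθ hθ0 g i (hg i)]
    refine tsum_congr fun x => ?_
    rw [Finset.sum_mul, Finset.mul_sum]
  have hR : ∑' x : Fin k → ℕ, negMultPMF k (m + 1) θ x *
        (negMultW k (m + 1) θ x * ∑ i, (∑ j, negMultSigma k (m + 1) θ i j) * fd g i x)
      = (∑ i, θ i * ∑' x : Fin k → ℕ, negMultPMF k (m + 1) θ x *
          (((m + 1 : ℕ) + ∑ j, (x j : ℝ)) * fd g i x)) / (1 - ∑ i, θ i) := by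
    simp_rw [← tsum_mul_left]
    rw [← Summable.tsum_finsetSum fun i _ => (sD i).mul_left (θ i), ← tsum_div_const]
    refine tsum_congr fun x => ?_
    rw [Finset.mul_sum, Finset.mul_sum, Finset.sum_div]
    refine Finset.sum_congr rfl fun i _ => ?_
    have hm : ((m + 1 : ℕ) : ℝ) ≠ 0 := by positivity
    rw [sum_negMultSigma, negMultW]
    field_simp
  rw [hR, (hasSum_negMultPMF_mul_sum m hθ hθ0).tsum_eq]
  simp_rw [hstein, mul_add, Finset.sum_add_distrib, ← Finset.sum_mul] at hsplit
  rw [eq_div_iff hne, sub_mul, div_mul_eq_mul_div, div_mul_cancel₀ _ hne]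
  linear_combination hsplit
end

section
/- Let k ≥ 2, let X = (X_1,…,X_k) follow the multinomial distribution M_k(n,π), and let g : ℕ^k → ℝ. Then for every integer x_k with 0 ≤ x_k < n, E[g(X) | X_k = x_k + 1] − E[g(X) | X_k = x_k] = E[ w_{-k|k}(X) · ( Δ_k g(X) + α_k Σ_{i=1}^{k-1} c_{i|k} Δ_i g(X) ) | X_k = x_k ], where α_k := −(1−π_k)/(π_0(n−x_k)), c_{i|k} := Σ_{j=1}^{k-1} Cov(X_i, X_j | X_k = x_k), and w_{-k|k} is the conditional multinomial w-function. -/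
/-!
Fix the conditioned coordinate `L` and a value `a < n`, and write `N x = n - ∑ x i` for the count
left to the implicit cell of probability `π₀`. All expectations in the statement are quotients of
the unnormalised functional `T a f = ∑_{x L = a} p(x) f(x)` (`condT`), a finite sum and hence
linear.

Everything follows from the one-step ratio `p(x + e_i) (x_i + 1) π₀ = p(x) N(x) π_i`
(`multPMF_step`). Shifting the summation variable by `e_i` turns it into the Stein-type identities
`π₀ T a (x_i f) = π_i T a (N f(· + e_i))` for `i ≠ L` (`condT_shift`) and
`π₀ (a + 1) T (a + 1) f = π_L T a (N f(· + e_L))` (`condT_shift_self`).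
Combined with `N + ∑_{i ≠ L} x_i = n - a` on `{x L = a}`, they give the first two conditional
moments of `N`, so that `c_i = Cov(X_i, n - a - N) = (n - a) q_i q₀` where
`q_i = π_i / (1 - π_L)` and `q₀ = π₀ / (1 - π_L)`
(`sum_condCov`); therefore `α c_i = -q_i`. The same identities evaluate `T a` on the right-hand
side, and the weights in front of `T a g` recombine because `q₀ + ∑_{i ≠ L} q_i = 1`.
-/

open scoped BigOperators

/-- The p.m.f. of the multinomial distribution `M_k(n, π)` on `ℕ^k`. -/
noncomputable def multPMF (k n : ℕ) (π : Fin k → ℝ) (x : Fin k → ℕ) : ℝ :=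
  if ∑ i, x i ≤ n then
    (Nat.factorial n : ℝ) /
        ((∏ i, (Nat.factorial (x i) : ℝ)) * (Nat.factorial (n - ∑ i, x i) : ℝ)) *
      (∏ i, π i ^ x i) * (1 - ∑ i, π i) ^ (n - ∑ i, x i)
  else 0

/-- Conditional expectation `E[f(X) | X_L = xk]` for a discrete random vector `X` on `ℕ^k`
with p.m.f. `p`. -/
noncomputable def condE (k : ℕ) (p : (Fin k → ℕ) → ℝ) (L : Fin k) (xk : ℕ)
    (f : (Fin k → ℕ) → ℝ) : ℝ :=
  (∑' x : Fin k → ℕ, if x L = xk then p x * f x else 0) /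
    (∑' x : Fin k → ℕ, if x L = xk then p x else 0)

/-- Conditional covariance `Cov(f(X), h(X) | X_L = xk)`. -/
noncomputable def condCov (k : ℕ) (p : (Fin k → ℕ) → ℝ) (L : Fin k) (xk : ℕ)
    (f h : (Fin k → ℕ) → ℝ) : ℝ :=
  condE k p L xk (fun x => f x * h x) - condE k p L xk f * condE k p L xk h

/-- The conditional multinomial `w`-function `w_{-k|k}`. -/
noncomputable def multCondW (k n : ℕ) (π : Fin k → ℝ) (L : Fin k) (x : Fin k → ℕ) : ℝ :=
  if x L = n then 0
  else (1 - π L) * ((n : ℝ) - ∑ i, (x i : ℝ)) / (((n : ℝ) - (x L : ℝ)) * (1 - ∑ i, π i))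

/-! ### The unnormalised conditional expectation -/

/-- The unnormalised conditional expectation `E[f(X); X_L = a]` under the multinomial law. -/
noncomputable def condT (k n : ℕ) (π : Fin k → ℝ) (L : Fin k) (a : ℕ)
    (f : (Fin k → ℕ) → ℝ) : ℝ :=
  ∑' x : Fin k → ℕ, if x L = a then multPMF k n π x * f x else 0

/-- The count `n - ∑ x i` of the implicit cell, taken in `ℝ` so that no truncation occurs. -/
def restCount (k n : ℕ) (x : Fin k → ℕ) : ℝ := (n : ℝ) - ∑ i, (x i : ℝ)

section
variable {k n : ℕ} {π : Fin k → ℝ} {L : Fin k} {a : ℕ}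

lemma condE_eq (f : (Fin k → ℕ) → ℝ) :
    condE k (multPMF k n π) L a f = condT k n π L a f / condT k n π L a (fun _ => 1) := by
  simp [condE, condT]

lemma condT_summable (f : (Fin k → ℕ) → ℝ) :
    Summable (fun x : Fin k → ℕ => if x L = a then multPMF k n π x * f x else 0) := by
  apply summable_of_hasFiniteSupport
  apply (Set.finite_Iic (fun _ : Fin k => n)).subset
  intro x hx i
  by_contra h
  apply hx
  have h1 : x i ≤ ∑ j, x j := Finset.single_le_sum (fun _ _ => Nat.zero_le _) (Finset.mem_univ i)
  have h2 : ¬ ∑ j, x j ≤ n := by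
    simp only [not_le] at h
    omega
  simp [multPMF, h2]

lemma condT_congr {f h : (Fin k → ℕ) → ℝ} (H : ∀ x, x L = a → f x = h x) :
    condT k n π L a f = condT k n π L a h := by
  unfold condT
  congr 1
  funext x
  split_ifs with hx
  · rw [H x hx]
  · rfl

lemma condT_sub (f h : (Fin k → ℕ) → ℝ) :
    condT k n π L a (fun x => f x - h x) = condT k n π L a f - condT k n π L a h := by
  unfold condT
  rw [← (condT_summable f).tsum_sub (condT_summable h)]
  congr 1
  funext x
  split_ifs <;> ring

lemma condT_const_mul (c : ℝ) (f : (Fin k → ℕ) → ℝ) :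
    condT k n π L a (fun x => c * f x) = c * condT k n π L a f := by
  unfold condT
  rw [← tsum_mul_left]
  congr 1
  funext x
  split_ifs <;> ring

lemma condT_sum {ι : Type*} (s : Finset ι) (f : ι → (Fin k → ℕ) → ℝ) :
    condT k n π L a (fun x => ∑ i ∈ s, f i x) = ∑ i ∈ s, condT k n π L a (f i) := by
  unfold condT
  rw [← Summable.tsum_finsetSum (fun i _ => condT_summable (f i))]
  congr 1
  funext x
  split_ifs
  · rw [Finset.mul_sum]
  · simp

/-! ### Shift identities -/

lemma sum_update_succ (x : Fin k → ℕ) (i : Fin k) :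
    ∑ j, Function.update x i (x i + 1) j = ∑ j, x j + 1 := by
  rw [Finset.sum_update_of_mem (Finset.mem_univ i), ← Finset.add_sum_erase _ x (Finset.mem_univ i),
    Finset.sdiff_singleton_eq_erase]
  ring

lemma restCount_update (x : Fin k → ℕ) (i : Fin k) :
    restCount k n (Function.update x i (x i + 1)) = restCount k n x - 1 := by
  have := sum_update_succ x i
  simp only [restCount, ← Nat.cast_sum, this]
  push_cast
  ring

lemma update_succ_injective (i : Fin k) :
    Function.Injective (fun x : Fin k → ℕ => Function.update x i (x i + 1)) := by
  intro x y h
  funext j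
  have hj := congrFun h j
  by_cases e : j = i
  · subst e
    simpa using hj
  · simpa [e] using hj

lemma mem_range_update_succ {i : Fin k} {x : Fin k → ℕ} (h : x i ≠ 0) :
    x ∈ Set.range (fun x : Fin k → ℕ => Function.update x i (x i + 1)) := by
  refine ⟨Function.update x i (x i - 1), ?_⟩
  have : x i - 1 + 1 = x i := by omega
  simp [this]

/-- The ratio of the p.m.f. at neighbouring points. -/
lemma multPMF_step (x : Fin k → ℕ) (i : Fin k) :
    (1 - ∑ i, π i) * (multPMF k n π (Function.update x i (x i + 1)) * ((x i : ℝ) + 1))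
      = π i * (multPMF k n π x * restCount k n x) := by
  unfold multPMF
  rw [sum_update_succ]
  by_cases h : ∑ j, x j + 1 ≤ n
  · obtain ⟨r, hr⟩ := Nat.exists_eq_add_of_le h
    have h1 : n - (∑ j, x j + 1) = r := by omega
    have h2 : n - ∑ j, x j = r + 1 := by omega
    have h3 : restCount k n x = r + 1 := by
      have : (n : ℝ) = ((∑ j, x j + 1 + r : ℕ) : ℝ) := by rw [← hr]
      rw [restCount, this]
      push_cast
      ring
    rw [if_pos h, if_pos (by omega), h1, h2, h3]
    have e1 : ∏ j, ((Function.update x i (x i + 1) j).factorial : ℝ)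
        = ((x i : ℝ) + 1) * ∏ j, ((x j).factorial : ℝ) := by
      rw [← Finset.mul_prod_erase _ _ (Finset.mem_univ i),
        ← Finset.mul_prod_erase _ (fun j => ((x j).factorial : ℝ)) (Finset.mem_univ i),
        Finset.prod_congr rfl (g := fun j => ((x j).factorial : ℝ))]
      · simp only [Function.update_self, Nat.factorial_succ]
        push_cast
        ring
      · intro j hj
        rw [Function.update_of_ne (Finset.ne_of_mem_erase hj)]
    have e2 : ∏ j, π j ^ (Function.update x i (x i + 1) j) = π i * ∏ j, π j ^ x j := by
      rw [← Finset.mul_prod_erase _ _ (Finset.mem_univ i),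
        ← Finset.mul_prod_erase _ (fun j => π j ^ x j) (Finset.mem_univ i),
        Finset.prod_congr rfl (g := fun j => π j ^ x j)]
      · simp only [Function.update_self]
        ring
      · intro j hj
        rw [Function.update_of_ne (Finset.ne_of_mem_erase hj)]
    rw [e1, e2, Nat.factorial_succ]
    have hp : ∏ j, ((x j).factorial : ℝ) ≠ 0 :=
      Finset.prod_ne_zero_iff.2 fun j _ => by positivity
    have hr0 : (r.factorial : ℝ) ≠ 0 := by positivity
    have hx : (x i : ℝ) + 1 ≠ 0 := by positivity
    have hr1 : (r : ℝ) + 1 ≠ 0 := by positivity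
    generalize ∏ j, ((x j).factorial : ℝ) = P at *
    generalize 1 - ∑ i, π i = p0
    push_cast
    field_simp
    ring
  · rw [if_neg h]
    split_ifs with hle
    -- On the boundary `∑ x j = n` the right-hand side vanishes through the factor `N x`.
    · have : ∑ j, x j = n := by omega
      have : restCount k n x = 0 := by
        rw [restCount, ← Nat.cast_sum, this, sub_self]
      rw [this]
      ring
    · ring

lemma condT_shift {i : Fin k} (hi : i ≠ L) (f : (Fin k → ℕ) → ℝ) :
    (1 - ∑ i, π i) * condT k n π L a (fun x => (x i : ℝ) * f x)
      = π i * condT k n π L a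
          (fun x => restCount k n x * f (Function.update x i (x i + 1))) := by
  unfold condT
  rw [← (update_succ_injective i).tsum_eq, ← tsum_mul_left, ← tsum_mul_left]
  · congr 1
    funext x
    rw [Function.update_of_ne hi.symm]
    split_ifs
    · have := multPMF_step (n := n) (π := π) x i
      simp only [Function.update_self]
      push_cast
      linear_combination f (Function.update x i (x i + 1)) * this
    · simp
  · intro x hx
    apply mem_range_update_succ
    intro h0
    apply hx
    simp [h0]

lemma condT_shift_self (f : (Fin k → ℕ) → ℝ) :
    (1 - ∑ i, π i) * (((a : ℝ) + 1) * condT k n π L (a + 1) f)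
      = π L * condT k n π L a
          (fun x => restCount k n x * f (Function.update x L (x L + 1))) := by
  unfold condT
  rw [← (update_succ_injective L).tsum_eq, ← tsum_mul_left, ← tsum_mul_left, ← tsum_mul_left]
  · congr 1
    funext x
    rw [Function.update_self]
    by_cases h : x L = a
    · have := multPMF_step (n := n) (π := π) x L
      rw [if_pos (by omega), if_pos h, ← h]
      linear_combination f (Function.update x L (x L + 1)) * this
    · rw [if_neg (by omega), if_neg h]
      simp
  · intro x hx
    apply mem_range_update_succ
    intro h0
    apply hx
    simp [h0]

/-! ### Conditional moments and covariances -/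

lemma condT_one_pos (hπ : ∀ i, 0 < π i) (hπ0 : 0 < 1 - ∑ i, π i) (ha : a ≤ n) :
    0 < condT k n π L a (fun _ => 1) := by
  have hsum : ∑ i, (Pi.single L a : Fin k → ℕ) i = a := by simp
  have hnn : ∀ x, 0 ≤ multPMF k n π x := by
    intro x
    unfold multPMF
    have := Finset.prod_nonneg (s := Finset.univ) (fun i _ => pow_nonneg (hπ i).le (x i))
    split_ifs <;> positivity
  refine (condT_summable (fun _ => 1)).tsum_pos (fun x => ?_) (Pi.single L a) ?_
  · split_ifs
    · simpa using hnn x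
    · exact le_rfl
  · rw [if_pos (by simp), mul_one]
    unfold multPMF
    rw [hsum, if_pos ha]
    have h1 : 0 < ∏ i, π i ^ (Pi.single L a : Fin k → ℕ) i :=
      Finset.prod_pos fun i _ => pow_pos (hπ i) _
    have h2 : (0 : ℝ) < ∏ i, (((Pi.single L a : Fin k → ℕ) i).factorial : ℝ) :=
      Finset.prod_pos fun i _ => by positivity
    positivity

lemma sum_erase_eq (x : Fin k → ℕ) (hx : x L = a) :
    ∑ i ∈ Finset.univ.erase L, (x i : ℝ) = ((n : ℝ) - a) - restCount k n x := by
  have := Finset.add_sum_erase Finset.univ (fun i => (x i : ℝ)) (Finset.mem_univ L)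
  simp only [hx] at this
  rw [restCount]
  linarith

/-- `condT_shift` summed over `i ≠ L`: since `∑_{i ≠ L} x_i = n - a - N` on `{x L = a}`, the
unshifted side involves only `f` and `N f`. -/
lemma condT_sum_shift (f : (Fin k → ℕ) → ℝ) :
    ∑ i ∈ Finset.univ.erase L, π i * condT k n π L a
          (fun x => restCount k n x * f (Function.update x i (x i + 1)))
      = (1 - ∑ i, π i) * (((n : ℝ) - a) * condT k n π L a f
          - condT k n π L a (fun x => restCount k n x * f x)) := by
  rw [← condT_const_mul, ← condT_sub, Finset.sum_congr rfl fun i hi =>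
    (condT_shift (Finset.ne_of_mem_erase hi) f).symm, ← Finset.mul_sum, ← condT_sum]
  congr 1
  apply condT_congr
  intro x hx
  rw [← Finset.sum_mul, sum_erase_eq (n := n) x hx]
  ring

lemma sum_erase_prob : ∑ i ∈ Finset.univ.erase L, π i = (1 - π L) - (1 - ∑ i, π i) := by
  have := Finset.add_sum_erase Finset.univ π (Finset.mem_univ L)
  linarith

/-- `E[N | X_L = a] = (n - a) π₀ / (1 - π_L)`, cleared of denominators. -/
lemma condT_rest :
    (1 - π L) * condT k n π L a (restCount k n)
      = (1 - ∑ i, π i) * (((n : ℝ) - a) * condT k n π L a (fun _ => 1)) := by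
  have h := condT_sum_shift (n := n) (L := L) (a := a) (π := π) (fun _ => 1)
  simp only [mul_one] at h
  rw [← Finset.sum_mul, sum_erase_prob] at h
  linear_combination h

/-- The second factorial moment `E[N (N - 1) | X_L = a]`, reduced to the mean of `N`. -/
lemma condT_rest_sq :
    (1 - π L) * condT k n π L a (fun x => restCount k n x * (restCount k n x - 1))
      = (1 - ∑ i, π i) * (((n : ℝ) - a - 1) * condT k n π L a (restCount k n)) := by
  have h := condT_sum_shift (n := n) (L := L) (a := a) (π := π) (restCount k n)
  simp only [restCount_update] at h
  rw [← Finset.sum_mul, sum_erase_prob] at h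
  have e : condT k n π L a (fun x => restCount k n x * (restCount k n x - 1))
      = condT k n π L a (fun x => restCount k n x * restCount k n x)
        - condT k n π L a (restCount k n) := by
    rw [← condT_sub]
    congr 1
    funext x
    ring
  linear_combination h + (1 - ∑ i, π i) * e

/-- The row sums of the conditional covariance matrix, `c_i = (n - a) q_i q₀`. They equal
`-Cov(X_i, N | X_L = a)` because `∑_{j ≠ L} X_j = n - a - N`. -/
lemma sum_condCov (hπ : ∀ i, 0 < π i) (hπ0 : 0 < 1 - ∑ i, π i) (hL : 0 < 1 - π L) (ha : a ≤ n)
    {i : Fin k} (hi : i ≠ L) :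
    ∑ j ∈ Finset.univ.erase L,
        condCov k (multPMF k n π) L a (fun y => (y i : ℝ)) (fun y => (y j : ℝ))
      = ((n : ℝ) - a) * π i * (1 - ∑ i, π i) / (1 - π L) ^ 2 := by
  have hZ := condT_one_pos (L := L) hπ hπ0 ha
  have h1 := condT_rest (n := n) (L := L) (a := a) (π := π)
  have h2 := condT_rest_sq (n := n) (L := L) (a := a) (π := π)
  have h3 := condT_shift (n := n) (a := a) (π := π) hi (fun _ => 1)
  have h4 := condT_shift (n := n) (a := a) (π := π) hi (restCount k n)
  simp only [restCount_update, mul_one] at h3 h4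
  simp only [condCov, condE_eq]
  rw [Finset.sum_sub_distrib, ← Finset.mul_sum, ← Finset.sum_div, ← Finset.sum_div,
    ← condT_sum, ← condT_sum]
  have e1 : condT k n π L a (fun x => ∑ j ∈ Finset.univ.erase L, (x i : ℝ) * (x j : ℝ))
      = ((n : ℝ) - a) * condT k n π L a (fun x => (x i : ℝ))
        - condT k n π L a (fun x => (x i : ℝ) * restCount k n x) := by
    rw [← condT_const_mul, ← condT_sub]
    apply condT_congr
    intro x hx
    rw [← Finset.mul_sum, sum_erase_eq (n := n) x hx]
    ring
  have e2 : condT k n π L a (fun x => ∑ j ∈ Finset.univ.erase L, (x j : ℝ))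
      = ((n : ℝ) - a) * condT k n π L a (fun _ => 1) - condT k n π L a (restCount k n) := by
    rw [← condT_const_mul, ← condT_sub]
    apply condT_congr
    intro x hx
    rw [sum_erase_eq (n := n) x hx]
    ring
  rw [e1, e2]
  generalize condT k n π L a (fun _ => 1) = Z at *
  generalize condT k n π L a (restCount k n) = R at *
  generalize condT k n π L a (fun x => restCount k n x * (restCount k n x - 1)) = Q at *
  generalize condT k n π L a (fun x => (x i : ℝ)) = M at *
  generalize condT k n π L a (fun x => (x i : ℝ) * restCount k n x) = W at *
  generalize 1 - ∑ i, π i = p at *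
  generalize 1 - π L = s at *
  have hR : R = p * ((n - a) * Z) / s := by
    field_simp
    linarith
  have hQ : Q = p * ((n - a - 1) * R) / s := by
    field_simp
    linarith
  have hM : M = π i * R / p := by
    field_simp
    linarith
  have hW : W = π i * Q / p := by
    field_simp
    linarith
  rw [hW, hQ, hM, hR]
  field_simp
  ring

end

/-! ### The difference identity -/

/-- For `X ~ M_k(n, π)` and `0 ≤ x_k < n`:
`Δ_k E[g(X) | X_k = x_k] = E[w_{-k|k}(X) (Δ_k g(X) + α_k Σ_{i<k} c_{i|k} Δ_i g(X)) | X_k = x_k]`,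
with `α_k = -(1-π_k)/(π₀ (n - x_k))` and `c_{i|k} = Σ_{j<k} Cov(X_i, X_j | X_k = x_k)`. -/
theorem multinomial_conditional_difference_identity
    (k n : ℕ) (hk : 2 ≤ k) (π : Fin k → ℝ)
    (hπ : ∀ i, 0 < π i ∧ π i < 1) (hπ0 : 0 < 1 - ∑ i, π i)
    (g : (Fin k → ℕ) → ℝ) (xk : ℕ) (hxk : xk < n) :
    let L : Fin k := ⟨k - 1, by omega⟩
    condE k (multPMF k n π) L (xk + 1) g - condE k (multPMF k n π) L xk g
      = condE k (multPMF k n π) L xk (fun x =>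
          multCondW k n π L x *
            (fd g L x +
              (-(1 - π L) / ((1 - ∑ i, π i) * ((n : ℝ) - (xk : ℝ)))) *
                ∑ i ∈ Finset.univ.erase L,
                  (∑ j ∈ Finset.univ.erase L,
                      condCov k (multPMF k n π) L xk
                        (fun y => (y i : ℝ)) (fun y => (y j : ℝ))) * fd g i x)) := by
  intro L
  have hpos : ∀ i, 0 < π i := fun i => (hπ i).1
  have hs : 0 < 1 - π L := by linarith [(hπ L).2]
  have hm : (0 : ℝ) < (n : ℝ) - xk := sub_pos.2 (by exact_mod_cast hxk)
  have hZ := condT_one_pos (L := L) hpos hπ0 hxk.le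
  -- On `{X_L = xk}` the right-hand integrand has the explicit coefficients `α c_i = -q_i`.
  have key : condT k n π L xk (fun x =>
          multCondW k n π L x *
            (fd g L x +
              (-(1 - π L) / ((1 - ∑ i, π i) * ((n : ℝ) - (xk : ℝ)))) *
                ∑ i ∈ Finset.univ.erase L,
                  (∑ j ∈ Finset.univ.erase L,
                      condCov k (multPMF k n π) L xk
                        (fun y => (y i : ℝ)) (fun y => (y j : ℝ))) * fd g i x))
      = (1 - π L) / (((n : ℝ) - xk) * (1 - ∑ i, π i)) *
          (condT k n π L xk
              (fun x => restCount k n x * g (Function.update x L (x L + 1)))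
            - (1 - ∑ i, π i) / (1 - π L)
                * condT k n π L xk (fun x => restCount k n x * g x)
            - 1 / (1 - π L) * ∑ i ∈ Finset.univ.erase L, π i * condT k n π L xk
                (fun x => restCount k n x * g (Function.update x i (x i + 1)))) := by
    simp only [← condT_const_mul]
    rw [← condT_sum, ← condT_const_mul, ← condT_sub, ← condT_sub, ← condT_const_mul]
    apply condT_congr
    intro x hx
    have hS : ∑ i ∈ Finset.univ.erase L,
          (∑ j ∈ Finset.univ.erase L, condCov k (multPMF k n π) L xk
            (fun y => (y i : ℝ)) (fun y => (y j : ℝ))) * fd g i x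
        = ((n : ℝ) - xk) * (1 - ∑ i, π i) / (1 - π L) ^ 2 *
          (∑ i ∈ Finset.univ.erase L, π i * g (Function.update x i (x i + 1))
            - ((1 - π L) - (1 - ∑ i, π i)) * g x) := by
      rw [← sum_erase_prob, Finset.sum_mul, ← Finset.sum_sub_distrib, Finset.mul_sum]
      refine Finset.sum_congr rfl fun i hi => ?_
      rw [sum_condCov hpos hπ0 hs hxk.le (Finset.ne_of_mem_erase hi), fd]
      ring
    have hN : ∑ i ∈ Finset.univ.erase L,
          π i * (restCount k n x * g (Function.update x i (x i + 1)))
        = restCount k n x *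
          ∑ i ∈ Finset.univ.erase L, π i * g (Function.update x i (x i + 1)) := by
      rw [Finset.mul_sum]
      exact Finset.sum_congr rfl fun i _ => by ring
    have hw : multCondW k n π L x
        = (1 - π L) * restCount k n x / (((n : ℝ) - xk) * (1 - ∑ i, π i)) := by
      rw [multCondW, if_neg (by omega), hx, restCount]
    rw [hS, hN, hw, fd]
    generalize ∑ i ∈ Finset.univ.erase L, π i * g (Function.update x i (x i + 1)) = G
    generalize 1 - ∑ i, π i = p at *
    generalize 1 - π L = s at *
    generalize (n : ℝ) - xk = m at *
    field_simp
    ring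
  have h1 := condT_rest (n := n) (L := L) (a := xk) (π := π)
  have h2 := condT_shift_self (n := n) (L := L) (a := xk) (π := π) (fun _ => 1)
  have h3 := condT_shift_self (n := n) (L := L) (a := xk) (π := π) g
  simp only [mul_one] at h2
  change _ = π L * condT k n π L xk (restCount k n) at h2
  have hL := hpos L
  rw [condE_eq, condE_eq, condE_eq, key, condT_sum_shift]
  generalize condT k n π L xk (fun x => restCount k n x * g (Function.update x L (x L + 1))) = A
    at *
  generalize condT k n π L xk (fun x => restCount k n x * g x) = B at *
  generalize condT k n π L xk (restCount k n) = R at *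
  generalize condT k n π L xk (fun _ => 1) = Z at *
  generalize condT k n π L (xk + 1) (fun _ => 1) = Z' at *
  generalize condT k n π L (xk + 1) g = E' at *
  generalize condT k n π L xk g = E at *
  generalize 1 - ∑ i, π i = p at *
  generalize 1 - π L = s at *
  generalize (n : ℝ) - xk = m at *
  have ha : (0 : ℝ) < (xk : ℝ) + 1 := by positivity
  have hR : R = p * (m * Z) / s := by
    field_simp
    linarith
  have hA : A = p * (((xk : ℝ) + 1) * E') / π L := by
    field_simp
    linarith
  -- The ratio of the marginal probabilities of `X_L = xk + 1` and `X_L = xk`.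
  have hZZ : Z' = π L * m * Z / (s * ((xk : ℝ) + 1)) := by
    rw [hR] at h2
    field_simp at h2 ⊢
    linarith
  rw [hA, hZZ]
  field_simp
  ring
end

section
/- Let k ≥ 2 and let X = (X_1,…,X_k) follow the multinomial distribution M_k(n,π). For every x = (x_1,…,x_k) ∈ ℕ^k with Σ_{i=1}^k x_i ≤ n and x_k < n, the conditional p.m.f.s satisfy p_{X_{-k}|X_k = x_k+1}(x_1,…,x_{k-1}) = p_{X_{-k}|X_k = x_k}(x_1,…,x_{k-1}) · w_{-k|k}(x), where X_{-k} := (X_1,…,X_{k-1}) and w_{-k|k} is the conditional multinomial w-function. -/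
open scoped BigOperators

/-- The marginal p.m.f. `P(X_L = xk)` of the `L`-th coordinate. -/
noncomputable def margPMF (k : ℕ) (p : (Fin k → ℕ) → ℝ) (L : Fin k) (xk : ℕ) : ℝ :=
  ∑' x : Fin k → ℕ, if x L = xk then p x else 0

lemma sum_update_add {k : ℕ} {M : Type*} [AddCommMonoid M] (g : Fin k → M) (L : Fin k) (a : M) :
    ∑ i, Function.update g L a i + g L = ∑ i, g i + a := by
  rw [← Finset.add_sum_erase _ _ (Finset.mem_univ L),
    ← Finset.add_sum_erase _ g (Finset.mem_univ L)]
  have : ∑ i ∈ Finset.univ.erase L, Function.update g L a i = ∑ i ∈ Finset.univ.erase L, g i :=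
    Finset.sum_congr rfl fun i hi => by rw [Function.update_of_ne (Finset.ne_of_mem_erase hi)]
  rw [this, Function.update_self]
  ac_rfl

/-- The p.m.f. at a point with `L`-th entry `j` is a term of the multinomial expansion of
`(1 - π_L)^(n - j)`, up to the binomial factor; `g` carries the residual count in entry `L`. -/
lemma multPMF_update (k n : ℕ) (π : Fin k → ℝ) (L : Fin k) (j : ℕ) (hj : j ≤ n)
    (g : Fin k → ℕ) (hg : ∑ i, g i = n - j) :
    multPMF k n π (Function.update g L j)
      = (n.factorial : ℝ) / (j.factorial * (n - j).factorial) * π L ^ j *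
        ((Nat.multinomial Finset.univ g : ℕ) *
          ∏ i, Function.update π L (1 - ∑ i, π i) i ^ g i) := by
  have hs := sum_update_add g L j
  have hgL : n - ∑ i, Function.update g L j i = g L := by omega
  have hle : ∑ i, Function.update g L j i ≤ n := by omega
  have hm : (∏ i, ((g i).factorial : ℝ)) * (Nat.multinomial Finset.univ g : ℕ)
      = (n - j).factorial := by
    rw [← hg]
    exact_mod_cast Nat.multinomial_spec Finset.univ g
  rw [multPMF, if_pos hle, hgL]
  have e1 : ∏ i, ((Function.update g L j i).factorial : ℝ)
      = j.factorial * ∏ i ∈ Finset.univ.erase L, ((g i).factorial : ℝ) := by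
    rw [← Finset.mul_prod_erase _ _ (Finset.mem_univ L), Function.update_self]
    congr 1
    exact Finset.prod_congr rfl fun i hi => by
      rw [Function.update_of_ne (Finset.ne_of_mem_erase hi)]
  have e2 : ∏ i, π i ^ Function.update g L j i
      = π L ^ j * ∏ i ∈ Finset.univ.erase L, π i ^ g i := by
    rw [← Finset.mul_prod_erase _ _ (Finset.mem_univ L), Function.update_self]
    congr 1
    exact Finset.prod_congr rfl fun i hi => by
      rw [Function.update_of_ne (Finset.ne_of_mem_erase hi)]
  have e3 : ∏ i, Function.update π L (1 - ∑ i, π i) i ^ g i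
      = (1 - ∑ i, π i) ^ g L * ∏ i ∈ Finset.univ.erase L, π i ^ g i := by
    rw [← Finset.mul_prod_erase _ _ (Finset.mem_univ L), Function.update_self]
    congr 1
    exact Finset.prod_congr rfl fun i hi => by
      rw [Function.update_of_ne (Finset.ne_of_mem_erase hi)]
  rw [← Finset.mul_prod_erase _ _ (Finset.mem_univ L)] at hm
  rw [e1, e2, e3]
  have hP : (∏ i ∈ Finset.univ.erase L, ((g i).factorial : ℝ)) ≠ 0 :=
    Finset.prod_ne_zero_iff.2 fun i _ => by positivity
  have h1 : ((g L).factorial : ℝ) ≠ 0 := by positivity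
  have h2 : (j.factorial : ℝ) ≠ 0 := by positivity
  have h3 : ((n - j).factorial : ℝ) ≠ 0 := by positivity
  rw [← hm] at h3 ⊢
  have h4 := right_ne_zero_of_mul h3
  field_simp

/-- The marginals of the multinomial distribution are binomial. -/
lemma margPMF_multPMF (k n : ℕ) (π : Fin k → ℝ) (L : Fin k) (j : ℕ) (hj : j ≤ n) :
    margPMF k (multPMF k n π) L j
      = (n.factorial : ℝ) / (j.factorial * (n - j).factorial) * π L ^ j
        * (1 - π L) ^ (n - j) := by
  have hw : ∑ i, Function.update π L (1 - ∑ i, π i) i = 1 - π L := by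
    have := sum_update_add π L (1 - ∑ i, π i)
    linarith
  rw [← hw, Finset.sum_pow_eq_sum_piAntidiag, Finset.mul_sum, margPMF,
    tsum_eq_sum (s := (Finset.piAntidiag Finset.univ (n - j)).image
      fun g => Function.update g L j), Finset.sum_image]
  · refine Finset.sum_congr rfl fun g hg => ?_
    rw [Function.update_self, if_pos rfl]
    exact multPMF_update k n π L j hj g (Finset.mem_piAntidiag.1 hg).1
  -- the entry `g L` erased by the update is recovered from the total `n - j`
  · intro g hg g' hg' h
    have hs : ∑ i, g i = n - j := (Finset.mem_piAntidiag.1 hg).1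
    have hs' : ∑ i, g' i = n - j := (Finset.mem_piAntidiag.1 hg').1
    have h1 := sum_update_add g L j
    have h2 := sum_update_add g' L j
    simp only at h
    rw [h] at h1
    funext i
    by_cases hi : i = L
    · subst hi; omega
    · simpa [hi] using congrFun h i
  · intro y hy
    by_contra hne
    have hyL : y L = j := by
      by_contra hc
      exact hne (if_neg hc)
    have hle : ∑ i, y i ≤ n := by
      by_contra hc
      exact hne (by rw [if_pos hyL, multPMF, if_neg hc])
    refine hy (Finset.mem_image.2 ⟨Function.update y L (n - ∑ i, y i), ?_, ?_⟩)
    · have := sum_update_add y L (n - ∑ i, y i)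
      have hsum : ∑ i, Function.update y L (n - ∑ i, y i) i = n - j := by omega
      exact Finset.mem_piAntidiag.2 ⟨hsum, fun i _ => Finset.mem_univ i⟩
    · simp [← hyL]

/-- The ratio of consecutive joint probabilities, with denominators cleared. -/
lemma multPMF_succ (k n : ℕ) (π : Fin k → ℝ) (L : Fin k) (x : Fin k → ℕ) (hx : ∑ i, x i ≤ n) :
    multPMF k n π (Function.update x L (x L + 1)) * ((x L + 1) * (1 - ∑ i, π i))
      = multPMF k n π x * (π L * ((n : ℝ) - ∑ i, (x i : ℝ))) := by
  have hs : ∑ i, Function.update x L (x L + 1) i = ∑ i, x i + 1 := by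
    have := sum_update_add x L (x L + 1)
    omega
  obtain ⟨m, hm⟩ := Nat.exists_eq_add_of_le hx
  have hc : (n : ℝ) - ∑ i, (x i : ℝ) = m := by rw [hm]; push_cast; ring
  rw [hc, multPMF, multPMF, hs, if_pos hx]
  rcases m with _ | m
  · rw [if_neg (by omega)]; simp
  have e1 : ∏ i, ((Function.update x L (x L + 1) i).factorial : ℝ)
      = (x L + 1) * ∏ i, ((x i).factorial : ℝ) := by
    rw [← Finset.mul_prod_erase _ _ (Finset.mem_univ L), Function.update_self,
      ← Finset.mul_prod_erase _ (fun i => ((x i).factorial : ℝ)) (Finset.mem_univ L),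
      Nat.factorial_succ, ← mul_assoc]
    push_cast
    congr 1
    exact Finset.prod_congr rfl fun i hi => by
      rw [Function.update_of_ne (Finset.ne_of_mem_erase hi)]
  have e2 : ∏ i, π i ^ Function.update x L (x L + 1) i = π L * ∏ i, π i ^ x i := by
    rw [← Finset.mul_prod_erase _ _ (Finset.mem_univ L), Function.update_self,
      ← Finset.mul_prod_erase _ (fun i => π i ^ x i) (Finset.mem_univ L), pow_succ', ← mul_assoc]
    congr 1
    exact Finset.prod_congr rfl fun i hi => by
      rw [Function.update_of_ne (Finset.ne_of_mem_erase hi)]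
  rw [if_pos (by omega), e1, e2, show n - (∑ i, x i + 1) = m by omega,
    show n - ∑ i, x i = m + 1 by omega, Nat.factorial_succ, pow_succ]
  have hP : (∏ i, ((x i).factorial : ℝ)) ≠ 0 :=
    Finset.prod_ne_zero_iff.2 fun i _ => by positivity
  have h1 : (m.factorial : ℝ) ≠ 0 := by positivity
  have h2 : (x L + 1 : ℝ) ≠ 0 := by positivity
  have h3 : (m + 1 : ℝ) ≠ 0 := by positivity
  push_cast
  field_simp

/-- For `X ~ M_k(n, π)` and `x ∈ ℕ^k` with `Σ xᵢ ≤ n` and `x_k < n`: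
`p_{X_{-k}|X_k = x_k+1}(x_{-k}) = p_{X_{-k}|X_k = x_k}(x_{-k}) · w_{-k|k}(x)`. -/
theorem multinomial_conditional_pmf_recurrence
    (k n : ℕ) (hk : 2 ≤ k) (π : Fin k → ℝ)
    (hπ : ∀ i, 0 < π i ∧ π i < 1) (hπ0 : 0 < 1 - ∑ i, π i)
    (x : Fin k → ℕ) (hx : ∑ i, x i ≤ n) :
    let L : Fin k := ⟨k - 1, by omega⟩
    x L < n →
    multPMF k n π (Function.update x L (x L + 1)) / margPMF k (multPMF k n π) L (x L + 1)
      = multPMF k n π x / margPMF k (multPMF k n π) L (x L) * multCondW k n π L x := by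
  intro L hL
  have hjoint := multPMF_succ k n π L x hx
  rw [margPMF_multPMF k n π L _ hL, margPMF_multPMF k n π L _ hL.le, multCondW, if_neg hL.ne]
  generalize multPMF k n π (Function.update x L (x L + 1)) = A at *
  generalize multPMF k n π x = B at *
  generalize (n : ℝ) - ∑ i, (x i : ℝ) = r at *
  generalize 1 - ∑ i, π i = q at *
  obtain ⟨hp, hp1⟩ := hπ L
  generalize π L = p at *
  generalize x L = j at *
  obtain ⟨m, rfl⟩ : ∃ m, n = j + 1 + m := Nat.exists_eq_add_of_le hL
  rw [show j + 1 + m - (j + 1) = m by omega, show j + 1 + m - j = m + 1 by omega,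
    Nat.factorial_succ j, Nat.factorial_succ m, pow_succ, pow_succ,
    show ((j + 1 + m : ℕ) : ℝ) - j = m + 1 by push_cast; ring]
  have hA : A = B * (p * r) / ((j + 1) * q) := by
    rw [eq_div_iff (by positivity)]; exact hjoint
  have hp' : 1 - p ≠ 0 := by linarith
  have hj : (j + 1 : ℝ) ≠ 0 := by positivity
  have hm : (m + 1 : ℝ) ≠ 0 := by positivity
  rw [hA]
  push_cast
  field_simp
end

section
/- Let k ≥ 2 and let X = (X_1,…,X_k) follow the negative multinomial distribution NM_k(r,θ). For every integer x_k ≥ 0, E[ w_{-k|k}(X) | X_k = x_k ] = 1, where w_{-k|k} is the conditional negative multinomial w-function. -/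
/-!
Conditioning on the last coordinate being `xk` leaves a sum over `y ∈ ℕ^n`, `n = k - 1`. With
`M = r + xk - 1` and `s` the sum of the first `n` parameters, the p.m.f. restricted to that
slice is a constant times `(M + |y|)! / (∏ yᵢ! M!) ∏ θᵢ ^ yᵢ`, whose sum is `(1 - s)⁻¹ ^ (M + 1)`
(`hasSum_negMult`: group by `|y| = j`, apply the multinomial theorem, then the negative binomial
series). Multiplying by the `w`-function, which is `(1 - s) (M + 1 + |y|) / (M + 1)` on the slice,
turns the summand into `1 - s` times the same expression with `M + 1` in place of `M`, so the sum
is unchanged and the quotient is `1`.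
-/

open scoped BigOperators

/-- The conditional negative multinomial `w`-function `w_{-k|k}`. -/
noncomputable def negCondW (k r : ℕ) (θ : Fin k → ℝ) (L : Fin k) (x : Fin k → ℕ) : ℝ :=
  ((1 - ∑ i, θ i) + θ L) * ((r : ℝ) + ∑ i, (x i : ℝ)) / ((r : ℝ) + (x L : ℝ))

/-- The negative multinomial series: the total mass of `NM_n(M + 1, a)` up to normalization. -/
lemma hasSum_negMult (n M : ℕ) (a : Fin n → ℝ) (ha : ∀ i, 0 ≤ a i) (hs : ∑ i, a i < 1) :
    HasSum (fun y : Fin n → ℕ => ((M + ∑ i, y i).factorial : ℝ) /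
      ((∏ i, ((y i).factorial : ℝ)) * (M.factorial : ℝ)) * ∏ i, a i ^ y i)
      ((1 - ∑ i, a i)⁻¹ ^ (M + 1)) := by
  set f : (Fin n → ℕ) → ℝ := fun y => ((M + ∑ i, y i).factorial : ℝ) /
      ((∏ i, ((y i).factorial : ℝ)) * (M.factorial : ℝ)) * ∏ i, a i ^ y i with hf
  have hf0 : ∀ y, 0 ≤ f y := fun y =>
    mul_nonneg (by positivity) (Finset.prod_nonneg fun i _ => pow_nonneg (ha i) _)
  set s := ∑ i, a i with hsdef
  have hs0 : 0 ≤ s := Finset.sum_nonneg fun i _ => ha i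
  have hfib : ∀ j : ℕ, HasSum (fun y : {y : Fin n → ℕ // ∑ i, y i = j} => f y)
      (((j + M).choose M : ℝ) * s ^ j) := by
    intro j
    have h1 : ((j + M).choose M : ℝ) * s ^ j
        = ∑ y ∈ Finset.piAntidiag Finset.univ j,
          Set.indicator {y : Fin n → ℕ | ∑ i, y i = j} f y := by
      rw [hsdef, Finset.sum_pow_eq_sum_piAntidiag, Finset.mul_sum]
      refine Finset.sum_congr rfl fun y hy => ?_
      have hy' : ∑ i, y i = j := (Finset.mem_piAntidiag.1 hy).1
      rw [Set.indicator_of_mem (by exact hy')]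
      have hm : (∏ i, ((y i).factorial : ℝ)) * (Nat.multinomial Finset.univ y : ℝ)
          = (j.factorial : ℝ) := by
        rw [← hy']; exact_mod_cast Nat.multinomial_spec Finset.univ y
      have hc : ((j + M).choose M : ℝ) * (M.factorial : ℝ) * (j.factorial : ℝ)
          = ((M + j).factorial : ℝ) := by
        have := Nat.add_choose_mul_factorial_mul_factorial j M
        rw [add_comm M j, ← this]
        push_cast
        ring
      have hp : (∏ i, ((y i).factorial : ℝ)) ≠ 0 :=
        Finset.prod_ne_zero_iff.2 fun i _ => by positivity
      have hM : (M.factorial : ℝ) ≠ 0 := by positivity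
      simp only [hf, hy']
      rw [← mul_assoc]
      congr 1
      rw [eq_div_iff (mul_ne_zero hp hM), ← hc, ← hm]
      ring
    rw [h1]
    refine (hasSum_subtype_iff_indicator
      (s := {y : Fin n → ℕ | ∑ i, y i = j}) (f := f)).2 ?_
    refine hasSum_sum_of_ne_finset_zero fun y hy => ?_
    refine Set.indicator_of_notMem (fun h => hy ?_) _
    exact Finset.mem_piAntidiag.2 ⟨h, fun i _ => Finset.mem_univ i⟩
  have hgeo : HasSum (fun j : ℕ => ((j + M).choose M : ℝ) * s ^ j) ((1 - s)⁻¹ ^ (M + 1)) := by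
    have := hasSum_choose_mul_geometric_of_norm_lt_one (𝕜 := ℝ) M (r := s)
      (by rwa [Real.norm_of_nonneg hs0])
    rwa [one_div, ← inv_pow] at this
  rw [← (Equiv.sigmaFiberEquiv fun y : Fin n → ℕ => ∑ i, y i).hasSum_iff]
  have hsum : Summable (f ∘ (Equiv.sigmaFiberEquiv fun y : Fin n → ℕ => ∑ i, y i)) := by
    refine (summable_sigma_of_nonneg fun _ => hf0 _).2 ⟨fun j => (hfib j).summable, ?_⟩
    refine hgeo.summable.congr fun j => ?_
    exact (hfib j).tsum_eq.symm
  exact HasSum.of_sigma hfib hgeo hsum.hasSum.cauchySeq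

/-- A sum over the slice `x_last = c` of `ℕ^(n+1)` is a sum over `ℕ^n`. -/
lemma tsum_slice (n c : ℕ) (g : (Fin (n + 1) → ℕ) → ℝ) :
    (∑' x : Fin (n + 1) → ℕ, if x (Fin.last n) = c then g x else 0)
      = ∑' y : Fin n → ℕ, g (Fin.snoc (α := fun _ => ℕ) y c) := by
  have hinj : Function.Injective
      (fun y : Fin n → ℕ => (Fin.snoc (α := fun _ => ℕ) y c : Fin (n + 1) → ℕ)) := by
    intro y z h
    simpa using congrArg (fun x : Fin (n + 1) → ℕ => Fin.init (α := fun _ => ℕ) x) h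
  rw [← hinj.tsum_eq]
  · simp
  · intro x hx
    have hx' : x (Fin.last n) = c := by
      by_contra h
      simp [h] at hx
    exact ⟨Fin.init (α := fun _ => ℕ) x, by simp [← hx']⟩

/-- For `X ~ NM_k(r, θ)` and every `x_k ≥ 0`: `E[w_{-k|k}(X) | X_k = x_k] = 1`. -/
theorem negative_multinomial_condW_conditional_expectation_one
    (k r : ℕ) (hk : 2 ≤ k) (hr : 1 ≤ r) (θ : Fin k → ℝ)
    (hθ : ∀ i, 0 < θ i ∧ θ i < 1) (hθ0 : 0 < 1 - ∑ i, θ i)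
    (xk : ℕ) :
    let L : Fin k := ⟨k - 1, by omega⟩
    condE k (negMultPMF k r θ) L xk (negCondW k r θ L) = 1 := by
  intro L
  obtain ⟨n, rfl⟩ : ∃ n, k = n + 1 := ⟨k - 1, by omega⟩
  obtain ⟨q, rfl⟩ : ∃ q, r = q + 1 := ⟨r - 1, by omega⟩
  have hL : L = Fin.last n := rfl
  clear_value L
  subst hL
  set a : Fin n → ℝ := fun i => θ i.castSucc with ha
  have hsplit : ∑ i, θ i = ∑ i, a i + θ (Fin.last n) := Fin.sum_univ_castSucc θ
  have hlast := (hθ (Fin.last n)).1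
  have hs : ∑ i, a i < 1 := by linarith
  have ha0 : ∀ i, 0 ≤ a i := fun i => (hθ _).1.le
  -- The slice constant, proportional to the marginal probability of `X_k = xk`.
  set C : ℝ := ((q + xk).factorial : ℝ) / ((xk.factorial : ℝ) * (q.factorial : ℝ)) *
    θ (Fin.last n) ^ xk * (1 - ∑ i, θ i) ^ (q + 1) with hC
  have hCpos : 0 < C := by positivity
  have hp : ∀ y : Fin n → ℕ, negMultPMF (n + 1) (q + 1) θ (Fin.snoc (α := fun _ => ℕ) y xk)
      = C * (((q + xk + ∑ i, y i).factorial : ℝ) /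
      ((∏ i, ((y i).factorial : ℝ)) * ((q + xk).factorial : ℝ)) * ∏ i, a i ^ y i) := by
    intro y
    have hp : (∏ i, ((y i).factorial : ℝ)) ≠ 0 :=
      Finset.prod_ne_zero_iff.2 fun i _ => by positivity
    have hidx : q + 1 + (∑ i, y i + xk) - 1 = q + xk + ∑ i, y i := by omega
    simp only [negMultPMF, Fin.sum_univ_castSucc (fun i => Fin.snoc (α := fun _ => ℕ) y xk i),
      Fin.prod_univ_castSucc, Fin.snoc_castSucc, Fin.snoc_last, hidx, hC, ha,
      Nat.add_sub_cancel]
    field_simp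
  have hw : ∀ y : Fin n → ℕ, negMultPMF (n + 1) (q + 1) θ (Fin.snoc (α := fun _ => ℕ) y xk) *
      negCondW (n + 1) (q + 1) θ (Fin.last n) (Fin.snoc (α := fun _ => ℕ) y xk)
      = C * (1 - ∑ i, a i) * (((q + xk + 1 + ∑ i, y i).factorial : ℝ) /
      ((∏ i, ((y i).factorial : ℝ)) * ((q + xk + 1).factorial : ℝ)) * ∏ i, a i ^ y i) := by
    intro y
    have hp' : (∏ i, ((y i).factorial : ℝ)) ≠ 0 :=
      Finset.prod_ne_zero_iff.2 fun i _ => by positivity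
    have hidx : q + xk + 1 + ∑ i, y i = (q + xk + ∑ i, y i) + 1 := by omega
    have hw' : negCondW (n + 1) (q + 1) θ (Fin.last n) (Fin.snoc (α := fun _ => ℕ) y xk)
        = (1 - ∑ i, a i) * ((q : ℝ) + xk + ∑ i, (y i : ℝ) + 1) / ((q : ℝ) + xk + 1) := by
      simp only [negCondW, hsplit,
        Fin.sum_univ_castSucc (fun i => ((Fin.snoc (α := fun _ => ℕ) y xk i : ℕ) : ℝ)),
        Fin.snoc_castSucc, Fin.snoc_last]
      push_cast
      congr 1 <;> ring
    have hne : (q : ℝ) + xk + 1 ≠ 0 := by positivity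
    rw [hp, hw', hidx, Nat.factorial_succ, Nat.factorial_succ]
    push_cast
    field_simp
  have hd : 1 - ∑ i, a i ≠ 0 := by linarith
  rw [condE, tsum_slice n xk, tsum_slice n xk]
  rw [tsum_congr hw, tsum_congr hp]
  rw [((hasSum_negMult n (q + xk) a ha0 hs).mul_left C).tsum_eq,
    ((hasSum_negMult n (q + xk + 1) a ha0 hs).mul_left (C * (1 - ∑ i, a i))).tsum_eq,
    pow_succ _ (q + xk + 1)]
  field_simp
end

section
/- Let k ≥ 2 and let X = (X_1,…,X_k) follow the negative multinomial distribution NM_k(r,θ). Then for every integer x_k ≥ 0 and every i ∈ {1,…,k-1}, Σ_{j=1}^{k-1} Cov(X_i, X_j | X_k = x_k) = (r+x_k) θ_i / (θ_0+θ_k)². -/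
/-!
Conditioning on `X_L = x_L` turns every conditional expectation into a ratio of sums over the slice
`{x | x L = x_L}`, in which all normalising constants cancel.  Writing `r = m + 1`, what remains is
the weight `W m x = (m + |x|)! / ∏ x_i! · ∏ θ_i ^ x_i` on that slice; let `Z m` be its total mass.

* The translation `x ↦ x + e_i` (`i ≠ L`) preserves the slice, and
  `(x + e_i)_i · W m (x + e_i) = θ_i · W (m + 1) x`. Hence (`hasSum_shift`) the sum of `x_i · W m` is
  `θ_i Z (m + 1)` and the sum of `x_i x_j · W m` is `θ_i (θ_j Z (m + 2) + δ_ij Z (m + 1))`.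
* Since `W (m + 1) x = (m + 1 + |x|) · W m x`, the first moments give
  `Z (m + 1) = (m + 1 + x_L) Z m + (∑_{j ≠ L} θ_j) Z (m + 1)`, so the ratio of consecutive masses is
  `Z (m + 1) / Z m = (m + 1 + x_L) / (θ_0 + θ_L)` (`slice_mass_succ`), without evaluating `Z` itself.

The row sum is then elementary algebra.  Convergence comes from the multinomial theorem:
grouping by `n = |x|` bounds the total mass by the series of `(m + n)! / n! · (∑ θ_i) ^ n`.
-/

open scoped BigOperators

namespace NegMult

/-- The p.m.f. of `NM_k(m + 1, θ)` stripped of the constant factor `θ_0 ^ (m + 1) / m!`. -/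
noncomputable def weight {k : ℕ} (θ : Fin k → ℝ) (m : ℕ) (x : Fin k → ℕ) : ℝ :=
  (Nat.factorial (m + ∑ i, x i) : ℝ) / (∏ i, (Nat.factorial (x i) : ℝ)) * ∏ i, θ i ^ x i

/-- `weight` restricted to the slice `{x | x L = c}`, extended by zero. -/
noncomputable def sliceWeight {k : ℕ} (θ : Fin k → ℝ) (L : Fin k) (c m : ℕ) (x : Fin k → ℕ) : ℝ :=
  if x L = c then weight θ m x else 0

variable {k : ℕ} {θ : Fin k → ℝ}

lemma weight_pos (hθ : ∀ i, 0 < θ i) (m : ℕ) (x : Fin k → ℕ) : 0 < weight θ m x := by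
  unfold weight
  have h1 : 0 < ∏ i, (Nat.factorial (x i) : ℝ) :=
    Finset.prod_pos fun i _ => by exact_mod_cast Nat.factorial_pos _
  have h2 : 0 < ∏ i, θ i ^ x i := Finset.prod_pos fun i _ => pow_pos (hθ i) _
  have h3 : (0 : ℝ) < Nat.factorial (m + ∑ i, x i) := by exact_mod_cast Nat.factorial_pos _
  positivity

lemma sliceWeight_nonneg (hθ : ∀ i, 0 < θ i) (L : Fin k) (c m : ℕ) (x : Fin k → ℕ) :
    0 ≤ sliceWeight θ L c m x := by
  unfold sliceWeight
  split_ifs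
  exacts [(weight_pos hθ m x).le, le_rfl]

/-- The multinomial theorem: the level set `|x| = n` has total weight `(m + n)! / n! · (∑ θ_i) ^ n`. -/
lemma sum_weight_level (m n : ℕ) :
    ∑ x ∈ Finset.piAntidiag Finset.univ n, weight θ m x
      = ((n + m).descFactorial m : ℝ) * (∑ i, θ i) ^ n := by
  rw [Finset.sum_pow_eq_sum_piAntidiag, Finset.mul_sum]
  refine Finset.sum_congr rfl fun x hx => ?_
  have hs : ∑ i, x i = n := (Finset.mem_piAntidiag.1 hx).1
  have h1 := Nat.multinomial_spec Finset.univ x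
  have h2 := Nat.factorial_mul_descFactorial (Nat.le_add_left m n)
  rw [Nat.add_sub_cancel] at h2
  rw [hs] at h1
  have h1' : (∏ i, (Nat.factorial (x i) : ℝ)) * (Nat.multinomial Finset.univ x : ℝ)
      = Nat.factorial n := by exact_mod_cast h1
  have h2' : (Nat.factorial n : ℝ) * ((n + m).descFactorial m : ℝ) = Nat.factorial (n + m) := by
    exact_mod_cast h2
  have h3 : (∏ i, (Nat.factorial (x i) : ℝ)) ≠ 0 :=
    Finset.prod_ne_zero_iff.2 fun i _ => by exact_mod_cast Nat.factorial_ne_zero _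
  unfold weight
  rw [hs, add_comm m n, ← h2', ← h1']
  field_simp

lemma summable_weight (hθ : ∀ i, 0 < θ i) (hS : ∑ i, θ i < 1) (m : ℕ) :
    Summable (weight θ m) := by
  have hS0 : 0 ≤ ∑ i, θ i := Finset.sum_nonneg fun i _ => (hθ i).le
  have hg : Summable fun n : ℕ => ((n + m).descFactorial m : ℝ) * (∑ i, θ i) ^ n :=
    summable_descFactorial_mul_geometric_of_norm_lt_one m
      (by rwa [Real.norm_of_nonneg hS0])
  refine summable_of_sum_le (c := ∑' n : ℕ, ((n + m).descFactorial m : ℝ) * (∑ i, θ i) ^ n)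
    (fun x => (weight_pos hθ m x).le) fun u => ?_
  classical
  rw [← Finset.sum_fiberwise_of_maps_to (t := u.image fun x => ∑ i, x i)
    (fun x hx => Finset.mem_image_of_mem _ hx)]
  refine le_trans (Finset.sum_le_sum fun n _ => ?_)
    (hg.sum_le_tsum _ fun n _ => by positivity)
  rw [← sum_weight_level]
  refine Finset.sum_le_sum_of_subset_of_nonneg (fun x hx => ?_)
    fun x _ _ => (weight_pos hθ m x).le
  simpa [Finset.mem_piAntidiag] using (Finset.mem_filter.1 hx).2

lemma summable_sliceWeight (hθ : ∀ i, 0 < θ i) (hS : ∑ i, θ i < 1) (L : Fin k) (c m : ℕ) :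
    Summable (sliceWeight θ L c m) := by
  refine (summable_weight hθ hS m).of_nonneg_of_le (sliceWeight_nonneg hθ L c m) fun x => ?_
  unfold sliceWeight
  split_ifs
  exacts [le_rfl, (weight_pos hθ m x).le]

lemma tsum_sliceWeight_pos (hθ : ∀ i, 0 < θ i) (hS : ∑ i, θ i < 1) (L : Fin k) (c m : ℕ) :
    0 < ∑' x, sliceWeight θ L c m x := by
  refine (summable_sliceWeight hθ hS L c m).tsum_pos (sliceWeight_nonneg hθ L c m)
    (fun _ => c) ?_
  simpa [sliceWeight] using weight_pos hθ m _

lemma weight_succ (m : ℕ) (x : Fin k → ℕ) :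
    weight θ (m + 1) x = ((m : ℝ) + 1 + ∑ i, (x i : ℝ)) * weight θ m x := by
  unfold weight
  rw [show m + 1 + ∑ i, x i = (m + ∑ i, x i) + 1 by ring, Nat.factorial_succ]
  push_cast
  ring

lemma weight_add_single (m : ℕ) (i : Fin k) (x : Fin k → ℕ) :
    ((x i : ℝ) + 1) * weight θ m (x + Pi.single i 1) = θ i * weight θ (m + 1) x := by
  have hsum : ∑ j, (x + Pi.single i 1 : Fin k → ℕ) j = ∑ j, x j + 1 := by
    simp [Finset.sum_add_distrib]
  have hfac : ∏ j, (Nat.factorial ((x + Pi.single i 1 : Fin k → ℕ) j) : ℝ)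
      = ((x i : ℝ) + 1) * ∏ j, (Nat.factorial (x j) : ℝ) := by
    rw [← Finset.mul_prod_erase _ _ (Finset.mem_univ i),
      ← Finset.mul_prod_erase (a := i) _ (fun j => (Nat.factorial (x j) : ℝ)) (Finset.mem_univ i),
      Finset.prod_congr rfl (g := fun j => (Nat.factorial (x j) : ℝ))
        fun j hj => by simp [Finset.ne_of_mem_erase hj]]
    simp [Nat.factorial_succ, mul_assoc]
  have hpow : ∏ j, θ j ^ (x + Pi.single i 1 : Fin k → ℕ) j = θ i * ∏ j, θ j ^ x j := by
    simp only [Pi.add_apply, pow_add, Finset.prod_mul_distrib]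
    rw [mul_comm]
    congr 1
    rw [Finset.prod_eq_single i] <;> simp +contextual
  have h3 : (∏ i, (Nat.factorial (x i) : ℝ)) ≠ 0 :=
    Finset.prod_ne_zero_iff.2 fun i _ => by exact_mod_cast Nat.factorial_ne_zero _
  have h4 : (x i : ℝ) + 1 ≠ 0 := by positivity
  unfold weight
  rw [hsum, hfac, hpow, show m + (∑ j, x j + 1) = m + 1 + ∑ j, x j by ring]
  field_simp

/-- Translation by `e_i` converts a factor `x_i` into `θ_i` and raises the parameter `m` by one. -/
lemma hasSum_shift {L i : Fin k} (hi : i ≠ L) {c m : ℕ} {g : (Fin k → ℕ) → ℝ} {A : ℝ}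
    (h : HasSum (fun x => sliceWeight θ L c (m + 1) x * g (x + Pi.single i 1)) A) :
    HasSum (fun x => sliceWeight θ L c m x * ((x i : ℝ) * g x)) (θ i * A) := by
  have hinj : Function.Injective fun x : Fin k → ℕ => x + Pi.single i 1 :=
    add_left_injective _
  refine (hinj.hasSum_iff ?_).1 ?_
  · intro x hx
    -- Outside the range of the translation `x i = 0`, so the term vanishes.
    have : x i = 0 := by
      by_contra h0
      refine hx ⟨x - Pi.single i 1, ?_⟩
      ext j
      by_cases hj : j = i
      · subst hj; simp; omega
      · simp [hj]
    simp [this]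
  · refine (congrArg (HasSum · _) (funext fun x => ?_)).mpr (h.mul_left (θ i))
    have hw := weight_add_single (θ := θ) m i x
    simp only [Function.comp, sliceWeight, Pi.add_apply, Pi.single_eq_same,
      Pi.single_eq_of_ne hi.symm, add_zero]
    split_ifs
    · push_cast
      linear_combination g (x + Pi.single i 1) * hw
    · simp

lemma hasSum_first (hθ : ∀ i, 0 < θ i) (hS : ∑ i, θ i < 1) {L i : Fin k} (hi : i ≠ L) (c m : ℕ) :
    HasSum (fun x => sliceWeight θ L c m x * (x i : ℝ))
      (θ i * ∑' x, sliceWeight θ L c (m + 1) x) := by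
  have := hasSum_shift (θ := θ) hi (c := c) (m := m) (g := fun _ => 1)
    (by simpa using (summable_sliceWeight hθ hS L c (m + 1)).hasSum)
  simpa using this

lemma hasSum_second (hθ : ∀ i, 0 < θ i) (hS : ∑ i, θ i < 1) {L i j : Fin k} (hi : i ≠ L)
    (hj : j ≠ L) (c m : ℕ) :
    HasSum (fun x => sliceWeight θ L c m x * ((x i : ℝ) * (x j : ℝ)))
      (θ i * (θ j * ∑' x, sliceWeight θ L c (m + 2) x
        + (if j = i then 1 else 0) * ∑' x, sliceWeight θ L c (m + 1) x)) := by
  refine hasSum_shift hi (g := fun x => (x j : ℝ)) ?_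
  convert (hasSum_first hθ hS hj c (m + 1)).add
    ((summable_sliceWeight hθ hS L c (m + 1)).hasSum.mul_left (if j = i then 1 else 0)) using 1
  ext x
  by_cases h : j = i
  · subst h; simp; ring
  · simp [h]

lemma slice_mass_succ (hθ : ∀ i, 0 < θ i) (hS : ∑ i, θ i < 1) (L : Fin k) (c m : ℕ) :
    (1 - ∑ j ∈ Finset.univ.erase L, θ j) * ∑' x, sliceWeight θ L c (m + 1) x
      = ((m : ℝ) + 1 + c) * ∑' x, sliceWeight θ L c m x := by
  have h1 := (summable_sliceWeight hθ hS L c m).hasSum.mul_left ((m : ℝ) + 1 + c)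
  have h2 := hasSum_sum (s := Finset.univ.erase L) fun j hj =>
    hasSum_first hθ hS (Finset.ne_of_mem_erase hj) c m
  have h3 : HasSum (sliceWeight θ L c (m + 1))
      (((m : ℝ) + 1 + c) * ∑' x, sliceWeight θ L c m x
        + ∑ j ∈ Finset.univ.erase L, θ j * ∑' x, sliceWeight θ L c (m + 1) x) := by
    refine (congrArg (HasSum · _) (funext fun x => ?_)).mpr (h1.add h2)
    rw [← Finset.mul_sum]
    simp only [sliceWeight]
    split_ifs with hx
    · rw [weight_succ, ← Finset.add_sum_erase _ _ (Finset.mem_univ L), hx]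
      ring
    · simp
  rw [← Finset.sum_mul] at h3
  linear_combination h3.tsum_eq

/-- The normalising constant of the p.m.f. cancels in a conditional expectation. -/
lemma condE_eq (hθ0 : 0 < 1 - ∑ i, θ i) (L : Fin k) (c m : ℕ) (f : (Fin k → ℕ) → ℝ) :
    condE k (negMultPMF k (m + 1) θ) L c f
      = (∑' x, sliceWeight θ L c m x * f x) / ∑' x, sliceWeight θ L c m x := by
  have hC : (1 - ∑ i, θ i) ^ (m + 1) / (Nat.factorial m : ℝ) ≠ 0 :=
    div_ne_zero (pow_pos hθ0 _).ne' (by exact_mod_cast Nat.factorial_ne_zero _)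
  have hp (x) : negMultPMF k (m + 1) θ x
      = (1 - ∑ i, θ i) ^ (m + 1) / (Nat.factorial m : ℝ) * weight θ m x := by
    unfold negMultPMF weight
    rw [show m + 1 + ∑ i, x i - 1 = m + ∑ i, x i by omega, Nat.add_sub_cancel]
    ring
  unfold condE
  symm
  rw [← mul_div_mul_left _ _ hC, ← tsum_mul_left, ← tsum_mul_left]
  congr 1 <;>
  · refine tsum_congr fun x => ?_
    rw [sliceWeight, hp]
    split_ifs <;> ring

end NegMult

open NegMult

/-- For `X ~ NM_k(r, θ)`, `x_k ≥ 0` and `i ∈ {1,…,k-1}`: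
`Σ_{j=1}^{k-1} Cov(X_i, X_j | X_k = x_k) = (r + x_k) θ_i / (θ₀ + θ_k)²`. -/
theorem negative_multinomial_conditional_covariance_row_sum
    (k r : ℕ) (hk : 2 ≤ k) (hr : 1 ≤ r) (θ : Fin k → ℝ)
    (hθ : ∀ i, 0 < θ i ∧ θ i < 1) (hθ0 : 0 < 1 - ∑ i, θ i)
    (xk : ℕ) :
    let L : Fin k := ⟨k - 1, by omega⟩
    ∀ i ∈ Finset.univ.erase L,
      (∑ j ∈ Finset.univ.erase L,
          condCov k (negMultPMF k r θ) L xk (fun y => (y i : ℝ)) (fun y => (y j : ℝ)))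
        = ((r : ℝ) + (xk : ℝ)) * θ i / ((1 - ∑ s, θ s) + θ L) ^ 2 := by
  intro L i hi
  obtain ⟨m, rfl⟩ : ∃ m, r = m + 1 := ⟨r - 1, by omega⟩
  have hpos : ∀ i, 0 < θ i := fun i => (hθ i).1
  have hS : ∑ i, θ i < 1 := by linarith
  have hiL := Finset.ne_of_mem_erase hi
  have hq : (1 - ∑ s, θ s) + θ L = 1 - ∑ j ∈ Finset.univ.erase L, θ j := by
    rw [← Finset.add_sum_erase _ _ (Finset.mem_univ L)]; ring
  have hq0 : 0 < 1 - ∑ j ∈ Finset.univ.erase L, θ j := by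
    rw [← hq]; linarith [hpos L]
  have h1 := slice_mass_succ hpos hS L xk m
  have h2 := slice_mass_succ hpos hS L xk (m + 1)
  have hZ0 := tsum_sliceWeight_pos hpos hS L xk m
  have hcov : ∀ j ∈ Finset.univ.erase L,
      condCov k (negMultPMF k (m + 1) θ) L xk (fun y => (y i : ℝ)) (fun y => (y j : ℝ))
        = θ j * (θ i * ((∑' x, sliceWeight θ L xk (m + 2) x) / (∑' x, sliceWeight θ L xk m x)
            - ((∑' x, sliceWeight θ L xk (m + 1) x) / (∑' x, sliceWeight θ L xk m x)) ^ 2))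
          + if j = i then
              θ i * ((∑' x, sliceWeight θ L xk (m + 1) x) / (∑' x, sliceWeight θ L xk m x))
            else 0 := by
    intro j hj
    have hjL := Finset.ne_of_mem_erase hj
    unfold condCov
    rw [condE_eq hθ0, condE_eq hθ0, condE_eq hθ0, (hasSum_first hpos hS hiL xk m).tsum_eq,
      (hasSum_first hpos hS hjL xk m).tsum_eq, (hasSum_second hpos hS hiL hjL xk m).tsum_eq]
    split_ifs <;> ring
  rw [Finset.sum_congr rfl hcov, Finset.sum_add_distrib, ← Finset.sum_mul,
    Finset.sum_ite_eq' _ _ _, if_pos hi, hq]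
  generalize (∑' x, sliceWeight θ L xk m x) = Z0 at *
  generalize (∑' x, sliceWeight θ L xk (m + 1) x) = Z1 at *
  rw [show m + 1 + 1 = m + 2 from rfl] at h2
  generalize (∑' x, sliceWeight θ L xk (m + 2) x) = Z2 at *
  generalize (∑ j ∈ Finset.univ.erase L, θ j) = S at *
  have hq' : 1 - S ≠ 0 := hq0.ne'
  have hZ1 : Z1 = ((m : ℝ) + 1 + xk) / (1 - S) * Z0 := by
    field_simp; linarith
  have hZ2 : Z2 = ((m : ℝ) + 2 + xk) / (1 - S) * Z1 := by
    push_cast at h2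
    field_simp; linarith
  rw [hZ2, hZ1]
  push_cast
  field_simp
  ring
end
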